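/- arXiv:2208.13500 — 2 statements merged into one kernel-verified Lean document; each statement's English description precedes it below -/
import Mathlib

section
/- Let (H, x, Y) be an sl2-triple in a finite-dimensional Lie algebra g over a field k of characteristic zero. Then g is the internal direct sum of the integer eigenspaces of ad(H): the family of subspaces (g_i)_{i ∈ ℤ} is independent, and the supremum over all i ∈ ℤ of the subspaces g_i equals all of g. -/
/-- The `i`-eigenspace of `ad H` on a Lie algebra `g`:
`g_i = {z ∈ g | ⁅H, z⁆ = (i : k) • z}`. -/
def gwt (k : Type*) [Field k] {g : Type*} [LieRing g] [LieAlgebra k g]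
    (H : g) (i : ℤ) : Submodule k g where
  carrier := {z | ⁅H, z⁆ = (i : k) • z}
  add_mem' := by
    intro a b ha hb
    simp only [Set.mem_setOf_eq] at *
    rw [lie_add, ha, hb, smul_add]
  zero_mem' := by simp
  smul_mem' := by
    intro c a ha
    simp only [Set.mem_setOf_eq] at *
    rw [lie_smul, ha]
    exact smul_comm c ((i : k)) a

/-!
Let `W` be the sum of the integer weight spaces of `h` in a module on which `e` and `f` act locally
nilpotently. By induction on the power of `e` that kills `v`, it suffices that `e v ∈ W` implies
`v ∈ W`. Since `e f` is onto on each weight space of positive weight, the part of `e v` with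
positive weights is `e u` for some `u ∈ W`, so replacing `v` by `v - u` we may assume that the
weights `μ` of `e v` are `≤ 0`. Then the product of the `h - (μ - 2)` maps `v` into the kernel of
`e`, where every vector is killed by some `h (h - 1) ⋯ (h - n)`. As `μ - 2 < 0`, the factors of the
composite are pairwise distinct, so `v ∈ W`.
-/

open Polynomial LieModule

theorem gwt_eq_eigenspace {k g : Type*} [Field k] [LieRing g] [LieAlgebra k g] (H : g) (i : ℤ) :
    gwt k H i = (toEnd k g g H).eigenspace (i : k) := by
  ext z
  rw [Module.End.mem_eigenspace_iff]
  rfl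

section Eigenspaces

variable {K V : Type*} [Field K] [AddCommGroup V] [Module K V] (φ : Module.End K V)

theorem ker_aeval_prod_X_sub_C (s : Finset K) :
    LinearMap.ker (aeval φ (∏ μ ∈ s, (X - C μ))) = ⨆ μ ∈ s, φ.eigenspace μ := by
  classical
  induction s using Finset.induction_on with
  | empty => simp [Module.End.one_eq_id]
  | insert μ s hμ ih =>
    have hcoprime : IsCoprime (X - C μ) (∏ ν ∈ s, (X - C ν)) :=
      IsCoprime.prod_right fun ν hν =>
        isCoprime_X_sub_C_of_isUnit_sub (sub_ne_zero.2 (ne_of_mem_of_not_mem hν hμ).symm).isUnit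
    rw [Finset.prod_insert hμ, ← sup_ker_aeval_eq_ker_aeval_mul_of_coprime φ hcoprime, ih,
      Finset.iSup_insert, Module.End.eigenspace_def]
    simp [Algebra.algebraMap_eq_smul_one]

theorem mem_biSup_eigenspace_iff {S : Set K} {v : V} :
    v ∈ ⨆ μ ∈ S, φ.eigenspace μ ↔
      ∃ s : Finset K, ↑s ⊆ S ∧ aeval φ (∏ μ ∈ s, (X - C μ)) v = 0 := by
  simp only [← LinearMap.mem_ker, ker_aeval_prod_X_sub_C]
  constructor
  · intro hv
    rw [iSup_subtype', Submodule.mem_iSup_iff_exists_finset] at hv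
    obtain ⟨s, hs⟩ := hv
    refine ⟨s.map (.subtype _), by simp, ?_⟩
    simpa [iSup_subtype] using hs
  · rintro ⟨s, hsS, hv⟩
    have hle : ⨆ μ ∈ s, φ.eigenspace μ ≤ ⨆ μ ∈ S, φ.eigenspace μ :=
      iSup₂_le fun μ hμ => le_biSup φ.eigenspace (hsS hμ)
    exact hle hv

theorem mem_biSup_eigenspace_union_of_aeval_mem {S T : Set K} (hST : Disjoint S T) {t : Finset K}
    (ht : ↑t ⊆ T) {v : V}
    (hv : aeval φ (∏ μ ∈ t, (X - C μ)) v ∈ ⨆ μ ∈ S, φ.eigenspace μ) :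
    v ∈ ⨆ μ ∈ S ∪ T, φ.eigenspace μ := by
  classical
  rw [mem_biSup_eigenspace_iff] at hv ⊢
  obtain ⟨s, hs, hv⟩ := hv
  refine ⟨s ∪ t, by simpa using Set.union_subset_union hs ht, ?_⟩
  rw [Finset.prod_union (Finset.disjoint_coe.1 (hST.mono hs ht)), map_mul, Module.End.mul_apply, hv]

theorem iSup_intCast_eigenspace_le_sup {R V : Type*} [CommRing R] [AddCommGroup V] [Module R V]
    (φ : Module.End R V) :
    ⨆ i : ℤ, φ.eigenspace (i : R) ≤
      (⨆ n : ℕ, φ.eigenspace ((n : R) + 1)) ⊔ ⨆ n : ℕ, φ.eigenspace (-(n : R)) := by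
  refine iSup_le fun i => ?_
  rcases i with n | n
  · cases n with
    | zero => exact le_sup_of_le_right (le_iSup_of_le 0 (by simp))
    | succ n => exact le_sup_of_le_left (le_iSup_of_le n (by simp))
  · exact le_sup_of_le_right (le_iSup_of_le (n + 1) (by simp))

theorem mem_iSup_intCast_eigenspace_of_aeval_mem [CharZero K] {s : Finset K}
    (hs : ↑s ⊆ Set.range fun n : ℕ => -(n : K) - 1) {v : V}
    (hv : aeval φ (∏ μ ∈ s, (X - C μ)) v ∈ ⨆ n : ℕ, φ.eigenspace (n : K)) :
    v ∈ ⨆ i : ℤ, φ.eigenspace (i : K) := by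
  have hdisj : Disjoint (Set.range ((↑) : ℕ → K)) (Set.range fun n : ℕ => -(n : K) - 1) := by
    rw [Set.disjoint_range_iff]
    intro i j hij
    have hsum : ((i + j + 1 : ℕ) : K) = 0 := by
      push_cast
      rw [hij]
      ring
    exact Nat.succ_ne_zero _ (Nat.cast_eq_zero.1 hsum)
  have hle : ⨆ μ ∈ Set.range ((↑) : ℕ → K) ∪ Set.range fun n : ℕ => -(n : K) - 1,
      φ.eigenspace μ ≤ ⨆ i : ℤ, φ.eigenspace (i : K) := by
    refine iSup₂_le ?_
    rintro _ (⟨n, rfl⟩ | ⟨n, rfl⟩)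
    · exact le_iSup_of_le (n : ℤ) (by simp)
    · exact le_iSup_of_le (-n - 1 : ℤ) (by simp)
  rw [← iSup_range (g := φ.eigenspace)] at hv
  exact hle (mem_biSup_eigenspace_union_of_aeval_mem φ hdisj hs hv)

end Eigenspaces

section Nilpotent

variable {R A : Type*} [CommRing R] [Ring A] [Algebra R A]

theorem lie_pow_eq_smul {a b : A} {c : R} (hab : ⁅a, b⁆ = c • b) (n : ℕ) :
    ⁅a, b ^ n⁆ = (n * c) • b ^ n := by
  induction n with
  | zero => simp [Ring.lie_def]
  | succ n ih =>
    have hmul : ⁅a, b ^ n * b⁆ = ⁅a, b ^ n⁆ * b + b ^ n * ⁅a, b⁆ := by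
      simp only [Ring.lie_def]
      noncomm_ring
    rw [pow_succ, hmul, ih, hab, smul_mul_assoc, mul_smul_comm, ← add_smul]
    push_cast
    congr 1
    ring

theorem isNilpotent_of_lie_eq_smul [IsDomain R] [CharZero R] [Module.IsTorsionFree R A]
    [Module.Finite R A] {a b : A} {c : R} (hc : c ≠ 0) (hab : ⁅a, b⁆ = c • b) : IsNilpotent b := by
  by_contra hb
  have hpow (n : ℕ) : b ^ n ≠ 0 := fun hn => hb ⟨n, hn⟩
  have hindep : LinearIndependent R fun n : ℕ => b ^ n :=
    Module.End.eigenvectors_linearIndependent' (LinearMap.mulLeft R a - LinearMap.mulRight R a)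
      (fun n : ℕ => n * c) (fun m n hmn => by simpa [hc] using hmn) _
      fun n => ⟨Module.End.mem_eigenspace_iff.2 (lie_pow_eq_smul hab n), hpow n⟩
  have := hindep.finite
  exact not_finite ℕ

theorem exists_toEnd_pow_apply_eq_zero {k L M : Type*} [Field k] [CharZero k] [LieRing L]
    [LieAlgebra k L] [AddCommGroup M] [Module k M] [LieRingModule L M] [LieModule k L M]
    [FiniteDimensional k M] {h a : L} {c : k} (hc : c ≠ 0) (ha : ⁅h, a⁆ = c • a) (v : M) :
    ∃ n : ℕ, (toEnd k L M a ^ n) v = 0 := by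
  have hlie : ⁅toEnd k L M h, toEnd k L M a⁆ = c • toEnd k L M a := by
    ext w
    simp [Ring.lie_def, leibniz_lie h a, ha]
  obtain ⟨n, hn⟩ := isNilpotent_of_lie_eq_smul hc hlie
  exact ⟨n, by rw [hn, LinearMap.zero_apply]⟩

end Nilpotent

section Weights

variable {R L M : Type*} [CommRing R] [LieRing L] [LieAlgebra R L]
  [AddCommGroup M] [Module R M] [LieRingModule L M] [LieModule R L M] {h a : L} {c : R}

theorem lie_mem_eigenspace_add (ha : ⁅h, a⁆ = c • a) {μ : R} {v : M}
    (hv : v ∈ (toEnd R L M h).eigenspace μ) : ⁅a, v⁆ ∈ (toEnd R L M h).eigenspace (μ + c) := by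
  rw [Module.End.mem_eigenspace_iff, toEnd_apply_apply] at hv ⊢
  rw [leibniz_lie, ha, smul_lie, hv, lie_smul, add_smul, add_comm]

theorem lie_aeval_comp_X_add_C (ha : ⁅h, a⁆ = c • a) (p : R[X]) (v : M) :
    ⁅a, aeval (toEnd R L M h) (p.comp (X + C c)) v⁆ = aeval (toEnd R L M h) p ⁅a, v⁆ := by
  induction p using Polynomial.induction_on generalizing v with
  | C r => simp
  | add p q hp hq => simp [hp, hq]
  | monomial n r ih =>
    have hX : ⁅a, aeval (toEnd R L M h) (X + C c) v⁆ = ⁅h, ⁅a, v⁆⁆ := by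
      simp [leibniz_lie h a, ha, add_comm]
    rw [pow_succ, ← mul_assoc, mul_comp, X_comp, map_mul, Module.End.mul_apply, ih, hX,
      map_mul _ (C r * X ^ n), Module.End.mul_apply, aeval_X, toEnd_apply_apply]

end Weights

section Sl2

section CommRing

variable {R L M : Type*} [CommRing R] [LieRing L] [LieAlgebra R L]
  [AddCommGroup M] [Module R M] [LieRingModule L M] [LieModule R L M] {h e f : L}

theorem lie_e_pow_succ_toEnd_f (t : IsSl2Triple h e f) (n : ℕ) (v : M) :
    ⁅e, (toEnd R L M f ^ (n + 1)) v⁆ =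
      (toEnd R L M f ^ (n + 1)) ⁅e, v⁆ +
        (n + 1 : R) • (toEnd R L M f ^ n) (⁅h, v⁆ - (n : R) • v) := by
  induction n generalizing v with
  | zero => simp [leibniz_lie e, t.lie_e_f, add_comm]
  | succ n ih =>
    have hcomm : ⁅h, ⁅f, v⁆⁆ = ⁅f, ⁅h, v⁆⁆ - (2 : R) • ⁅f, v⁆ := by
      rw [leibniz_lie h, t.lie_lie_smul_f R, neg_lie, smul_lie]
      abel
    rw [pow_succ _ (n + 1), Module.End.mul_apply, Module.End.mul_apply, toEnd_apply_apply, ih,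
      leibniz_lie e, t.lie_e_f, toEnd_apply_apply, hcomm]
    simp only [map_add, map_sub, map_smul, pow_succ _ n, Module.End.mul_apply, toEnd_apply_apply]
    push_cast
    module

theorem lie_f_mem_eigenspace_sub_two (t : IsSl2Triple h e f) {μ : R} {v : M}
    (hv : v ∈ (toEnd R L M h).eigenspace μ) :
    ⁅f, v⁆ ∈ (toEnd R L M h).eigenspace (μ - 2) := by
  rw [sub_eq_add_neg]
  exact lie_mem_eigenspace_add (by rw [t.lie_lie_smul_f R, neg_smul]) hv

end CommRing

variable {k L M : Type*} [Field k] [CharZero k] [LieRing L] [LieAlgebra k L]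
  [AddCommGroup M] [Module k M] [LieRingModule L M] [LieModule k L M] {h e f : L}

theorem aeval_prod_range_eq_zero_of_lie_e_eq_zero (t : IsSl2Triple h e f) {n : ℕ} {v : M}
    (hev : ⁅e, v⁆ = 0) (hfv : (toEnd k L M f ^ n) v = 0) :
    aeval (toEnd k L M h) (∏ i ∈ Finset.range n, (X - C (i : k))) v = 0 := by
  induction n generalizing v with
  | zero => simpa using hfv
  | succ n ih =>
    have he : ⁅e, ⁅h, v⁆ - (n : k) • v⁆ = 0 := by
      rw [lie_sub, lie_smul, leibniz_lie, ← lie_skew, t.lie_h_e_smul k, hev]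
      simp [hev]
    have hf : (toEnd k L M f ^ n) (⁅h, v⁆ - (n : k) • v) = 0 := by
      have hcomm := lie_e_pow_succ_toEnd_f (R := k) t n v
      rw [hfv, hev, lie_zero, map_zero, zero_add, eq_comm, smul_eq_zero] at hcomm
      exact hcomm.resolve_left (Nat.cast_add_one_ne_zero n)
    rw [Finset.prod_range_succ, map_mul, Module.End.mul_apply]
    convert ih he hf using 2
    rw [map_sub, aeval_X, aeval_C, LinearMap.sub_apply, toEnd_apply_apply,
      Module.algebraMap_end_apply]

theorem mem_iSup_natCast_eigenspace_of_lie_e_eq_zero (t : IsSl2Triple h e f) {n : ℕ} {v : M}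
    (hev : ⁅e, v⁆ = 0) (hfv : (toEnd k L M f ^ n) v = 0) :
    v ∈ ⨆ i : ℕ, (toEnd k L M h).eigenspace (i : k) := by
  rw [← iSup_range (g := (toEnd k L M h).eigenspace), mem_biSup_eigenspace_iff]
  refine ⟨(Finset.range n).map Nat.castEmbedding, by simp, ?_⟩
  rw [Finset.prod_map]
  exact aeval_prod_range_eq_zero_of_lie_e_eq_zero t hev hfv

-- Applying `e` to `f e u + c u = w` turns it into `(f e + c') (e u) = e w` with `c' = i + 2 + c`.
theorem exists_lie_f_lie_e_add_smul_eq (t : IsSl2Triple h e f) {m i c : ℕ} (hc : c ≠ 0) {w : M}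
    (hw : w ∈ (toEnd k L M h).eigenspace (i : k)) (hew : (toEnd k L M e ^ m) w = 0) :
    ∃ u ∈ (toEnd k L M h).eigenspace (i : k), ⁅f, ⁅e, u⁆⁆ + (c : k) • u = w := by
  induction m generalizing i c w with
  | zero => exact ⟨0, zero_mem _, by simpa using hew.symm⟩
  | succ m ih =>
    have hew' : ⁅e, w⁆ ∈ (toEnd k L M h).eigenspace ((i + 2 : ℕ) : k) := by
      simpa using lie_mem_eigenspace_add (t.lie_h_e_smul k) hw
    obtain ⟨u, hu, huw⟩ := ih (c := i + 2 + c) (by omega) hew' (by simpa [pow_succ] using hew)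
    have hfu : ⁅f, u⁆ ∈ (toEnd k L M h).eigenspace (i : k) := by
      simpa using lie_f_mem_eigenspace_sub_two t hu
    have hc' : (c : k) ≠ 0 := Nat.cast_ne_zero.2 hc
    have heu : ⁅e, (c : k)⁻¹ • (w - ⁅f, u⁆)⁆ = u := by
      rw [Module.End.mem_eigenspace_iff, toEnd_apply_apply] at hu
      rw [lie_smul, lie_sub, leibniz_lie e f, t.lie_e_f, hu, ← huw, inv_smul_eq_iff₀ hc']
      push_cast
      module
    refine ⟨(c : k)⁻¹ • (w - ⁅f, u⁆), Submodule.smul_mem _ _ (sub_mem hw hfu), ?_⟩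
    rw [heu, smul_inv_smul₀ hc', add_sub_cancel]

theorem exists_lie_e_lie_f_eq (t : IsSl2Triple h e f) {m i : ℕ} (hi : i ≠ 0) {w : M}
    (hw : w ∈ (toEnd k L M h).eigenspace (i : k)) (hew : (toEnd k L M e ^ m) w = 0) :
    ∃ u ∈ (toEnd k L M h).eigenspace (i : k), ⁅e, ⁅f, u⁆⁆ = w := by
  obtain ⟨u, hu, huw⟩ := exists_lie_f_lie_e_add_smul_eq t hi hw hew
  refine ⟨u, hu, ?_⟩
  rw [Module.End.mem_eigenspace_iff, toEnd_apply_apply] at hu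
  rw [leibniz_lie, t.lie_e_f, hu, add_comm, huw]

theorem iSup_pos_eigenspace_le_map_toEnd_e (t : IsSl2Triple h e f)
    (he : ∀ v : M, ∃ n : ℕ, (toEnd k L M e ^ n) v = 0) :
    ⨆ n : ℕ, (toEnd k L M h).eigenspace ((n : k) + 1) ≤
      (⨆ i : ℤ, (toEnd k L M h).eigenspace (i : k)).map (toEnd k L M e) := by
  refine iSup_le fun n w hw => ?_
  obtain ⟨m, hm⟩ := he w
  obtain ⟨u, hu, huw⟩ := exists_lie_e_lie_f_eq (i := n + 1) t n.succ_ne_zero (by simpa using hw) hm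
  have hfu : ⁅f, u⁆ ∈ (toEnd k L M h).eigenspace ((n - 1 : ℤ) : k) := by
    convert lie_f_mem_eigenspace_sub_two t hu using 2
    push_cast
    ring
  exact ⟨⁅f, u⁆, Submodule.mem_iSup_of_mem _ hfu, huw⟩

theorem mem_iSup_intCast_eigenspace_of_lie_e_mem_iSup_nonpos (t : IsSl2Triple h e f)
    (hf : ∀ v : M, ∃ n : ℕ, (toEnd k L M f ^ n) v = 0) {v : M}
    (hv : ⁅e, v⁆ ∈ ⨆ n : ℕ, (toEnd k L M h).eigenspace (-(n : k))) :
    v ∈ ⨆ i : ℤ, (toEnd k L M h).eigenspace (i : k) := by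
  classical
  rw [← iSup_range (g := (toEnd k L M h).eigenspace)] at hv
  obtain ⟨s, hs, hsv⟩ := (mem_biSup_eigenspace_iff _).1 hv
  have hcomp : (∏ μ ∈ s, (X - C μ)).comp (X + C 2) = ∏ μ ∈ s.image (· - 2), (X - C μ) := by
    rw [prod_comp, Finset.prod_image sub_left_injective.injOn]
    refine Finset.prod_congr rfl fun μ _ => ?_
    rw [sub_comp, X_comp, C_comp, C_sub, sub_sub_eq_add_sub]
  rw [← lie_aeval_comp_X_add_C (t.lie_h_e_smul k), hcomp] at hsv
  have hneg : ↑(s.image (· - 2)) ⊆ Set.range fun n : ℕ => -(n : k) - 1 := by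
    rw [Finset.coe_image, Set.image_subset_iff]
    refine hs.trans ?_
    rintro _ ⟨n, rfl⟩
    refine ⟨n + 1, ?_⟩
    push_cast
    ring
  obtain ⟨n, hn⟩ := hf (aeval (toEnd k L M h) (∏ μ ∈ s.image (· - 2), (X - C μ)) v)
  exact mem_iSup_intCast_eigenspace_of_aeval_mem _ hneg
    (mem_iSup_natCast_eigenspace_of_lie_e_eq_zero t hsv hn)

theorem mem_iSup_intCast_eigenspace_of_lie_e_mem (t : IsSl2Triple h e f)
    (he : ∀ v : M, ∃ n : ℕ, (toEnd k L M e ^ n) v = 0)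
    (hf : ∀ v : M, ∃ n : ℕ, (toEnd k L M f ^ n) v = 0) {v : M}
    (hv : ⁅e, v⁆ ∈ ⨆ i : ℤ, (toEnd k L M h).eigenspace (i : k)) :
    v ∈ ⨆ i : ℤ, (toEnd k L M h).eigenspace (i : k) := by
  obtain ⟨y, hy, z, hz, hyz⟩ := Submodule.mem_sup.1 (iSup_intCast_eigenspace_le_sup _ hv)
  obtain ⟨u, hu, rfl⟩ := iSup_pos_eigenspace_le_map_toEnd_e t he hy
  have hsub : ⁅e, v - u⁆ = z := by
    rw [lie_sub, ← hyz, toEnd_apply_apply, add_sub_cancel_left]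
  rw [← sub_add_cancel v u]
  exact add_mem (mem_iSup_intCast_eigenspace_of_lie_e_mem_iSup_nonpos t hf (hsub ▸ hz)) hu

theorem iSup_intCast_eigenspace_toEnd_h_eq_top (t : IsSl2Triple h e f)
    (he : ∀ v : M, ∃ n : ℕ, (toEnd k L M e ^ n) v = 0)
    (hf : ∀ v : M, ∃ n : ℕ, (toEnd k L M f ^ n) v = 0) :
    ⨆ i : ℤ, (toEnd k L M h).eigenspace (i : k) = ⊤ := by
  refine eq_top_iff.2 fun v _ => ?_
  obtain ⟨n, hn⟩ := he v
  induction n generalizing v with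
  | zero =>
    obtain rfl : v = 0 := hn
    exact zero_mem _
  | succ n ih =>
    rw [pow_succ, Module.End.mul_apply] at hn
    exact mem_iSup_intCast_eigenspace_of_lie_e_mem t he hf (ih _ trivial hn)

theorem stmt0_general (hhe : ⁅h, e⁆ = (2 : k) • e) (hhf : ⁅h, f⁆ = (-2 : k) • f)
    (hef : ⁅e, f⁆ = h) (he : ∀ v : M, ∃ n : ℕ, (toEnd k L M e ^ n) v = 0)
    (hf : ∀ v : M, ∃ n : ℕ, (toEnd k L M f ^ n) v = 0) :
    iSupIndep (fun i : ℤ => (toEnd k L M h).eigenspace (i : k)) ∧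
      ⨆ i : ℤ, (toEnd k L M h).eigenspace (i : k) = ⊤ := by
  refine ⟨(toEnd k L M h).eigenspaces_iSupIndep.comp Int.cast_injective, ?_⟩
  by_cases h0 : h = 0
  · exact eq_top_iff.2 (le_iSup_of_le 0 (by simp [h0]))
  · have t : IsSl2Triple h e f :=
      { h_ne_zero := h0
        lie_e_f := hef
        lie_h_e_nsmul := by rw [hhe, ofNat_smul_eq_nsmul]
        lie_h_f_nsmul := by rw [hhf, neg_smul, ofNat_smul_eq_nsmul] }
    exact iSup_intCast_eigenspace_toEnd_h_eq_top t he hf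

end Sl2

/-- The family of eigenspaces `(g_i)_{i ∈ ℤ}` of `ad H` is independent and
its supremum is the whole of `g`. -/
theorem stmt0 {k : Type*} [Field k] [CharZero k]
    {g : Type*} [LieRing g] [LieAlgebra k g] [FiniteDimensional k g]
    (H x Y : g) (hHx : ⁅H, x⁆ = (2 : k) • x) (hHY : ⁅H, Y⁆ = (-2 : k) • Y)
    (hxY : ⁅x, Y⁆ = H) :
    iSupIndep (fun i : ℤ => gwt k H i) ∧ (⨆ i : ℤ, gwt k H i) = ⊤ := by
  simpa only [gwt_eq_eigenspace] using stmt0_general hHx hHY hxY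
    (exists_toEnd_pow_apply_eq_zero two_ne_zero hHx)
    (exists_toEnd_pow_apply_eq_zero (neg_ne_zero.2 two_ne_zero) hHY)
end

section
/- Let (H, x, Y) be an sl2-triple in a finite-dimensional Lie algebra g over a field k of characteristic zero. Let 𝔳 be the supremum of the subspaces g_i over all integers i ≥ 2, and let ⁅𝔳, 𝔳⁆ be the k-span of all brackets of pairs of elements of 𝔳. Then the k-linear map g_2 × g_3 → 𝔳/⁅𝔳, 𝔳⁆ sending (a, b) to the class of a + b is a linear isomorphism. -/
/-- The sum `⨆ {i ≥ n} g_i` of the eigenspaces of `ad H` with eigenvalue at least `n`. -/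
def vsp (k : Type*) [Field k] {g : Type*} [LieRing g] [LieAlgebra k g]
    (H : g) (n : ℤ) : Submodule k g :=
  ⨆ i : ℤ, ⨆ _ : n ≤ i, gwt k H i

/-- The commutator subspace `⁅V, V⁆`: the `k`-span of all brackets of pairs of
elements of `V`. -/
def brkt (k : Type*) [Field k] {g : Type*} [LieRing g] [LieAlgebra k g]
    (V : Submodule k g) : Submodule k g :=
  Submodule.span k {w : g | ∃ a ∈ V, ∃ b ∈ V, w = ⁅a, b⁆}

lemma gwt_le_vsp (k : Type*) [Field k] {g : Type*} [LieRing g] [LieAlgebra k g]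
    (H : g) {n i : ℤ} (h : n ≤ i) : gwt k H i ≤ vsp k H n :=
  le_iSup_of_le i (le_iSup_of_le h le_rfl)

/-- The map `g_2 × g_3 → 𝔳 ⧸ ⁅𝔳, 𝔳⁆`, `(a, b) ↦ [a + b]`, where
`𝔳 = ⨆ {i ≥ 2} g_i`. -/
def addClassMap (k : Type*) [Field k] {g : Type*} [LieRing g] [LieAlgebra k g]
    (H : g) :
    gwt k H 2 × gwt k H 3 →
      (vsp k H 2 ⧸ (brkt k (vsp k H 2)).comap (vsp k H 2).subtype) :=
  fun p => Submodule.Quotient.mk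
    (Submodule.inclusion (gwt_le_vsp k H (le_refl (2 : ℤ))) p.1 +
      Submodule.inclusion (gwt_le_vsp k H (by norm_num : (2 : ℤ) ≤ 3)) p.2)

/-!
The point is that `⁅𝔳, 𝔳⁆ = ⨆ {i ≥ 4} g_i`. The inclusion `≤` holds because brackets add weights.
For `≥`, write `c (n, i) = (n + 1) (i + n)`; the `sl₂` commutation relation
`(ad x) ^ (n + 1) ∘ ad Y = ad Y ∘ (ad x) ^ (n + 1) + c (n, i) • (ad x) ^ n` on `g_i` and the
nilpotency of `ad x` show that `ad x` maps `g_{i - 2}` onto `g_i` for `i ≥ 1`; as `x ∈ 𝔳`, this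
makes `g_i` part of `⁅𝔳, 𝔳⁆` for `i ≥ 4`. Independence of the eigenspaces `g_i` then leaves exactly
`g_2 ⊕ g_3` in the quotient.
-/

section Commutators

attribute [local instance] LieRing.ofAssociativeRing

section Associative

variable {k A : Type*} [Ring A] {h e f : A}

lemma lie_pow_of_lie_eq_smul [CommSemiring k] [Algebra k A] {c : k} (hhe : ⁅h, e⁆ = c • e)
    (n : ℕ) : ⁅h, e ^ n⁆ = (n * c) • e ^ n := by
  induction n with
  | zero => simp [Ring.lie_def]
  | succ n ih =>
    calc ⁅h, e ^ (n + 1)⁆ = ⁅h, e ^ n⁆ * e + e ^ n * ⁅h, e⁆ := by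
          simp only [Ring.lie_def, pow_succ]
          noncomm_ring
      _ = ((n + 1 : ℕ) * c) • e ^ (n + 1) := by
          rw [ih, hhe, smul_mul_assoc, mul_smul_comm, ← pow_succ, ← add_smul]
          push_cast
          rw [add_one_mul]

lemma pow_succ_lie_of_sl2_relations [CommRing k] [Algebra k A] (hhe : ⁅h, e⁆ = (2 : k) • e)
    (hef : ⁅e, f⁆ = h) (n : ℕ) : ⁅e ^ (n + 1), f⁆ = (n + 1) • (e ^ n * (h + n)) := by
  induction n with
  | zero => simp [hef]
  | succ n ih =>
    have hcomm : h * e ^ (n + 1) = e ^ (n + 1) * h + (2 * (n + 1)) • e ^ (n + 1) := by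
      rw [← sub_eq_iff_eq_add', ← Ring.lie_def, lie_pow_of_lie_eq_smul hhe,
        ← Nat.cast_smul_eq_nsmul k]
      push_cast
      rw [mul_comm]
    calc ⁅e ^ (n + 2), f⁆ = e * ⁅e ^ (n + 1), f⁆ + ⁅e, f⁆ * e ^ (n + 1) := by
          simp only [Ring.lie_def, pow_succ' e (n + 1)]
          noncomm_ring
      _ = (n + 1) • (e ^ (n + 1) * (h + n)) +
            (e ^ (n + 1) * h + (2 * (n + 1)) • e ^ (n + 1)) := by
          rw [ih, hef, hcomm, mul_smul_comm, ← mul_assoc, ← pow_succ']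
      _ = (n + 2) • (e ^ (n + 1) * (h + (n + 1 : ℕ))) := by
          simp only [nsmul_eq_mul, mul_add, ← Nat.cast_comm]
          push_cast
          noncomm_ring

lemma isNilpotent_of_lie_eq_smul_s7 [Field k] [CharZero k] [Algebra k A] [FiniteDimensional k A]
    {c : k} (hc : c ≠ 0) (hhe : ⁅h, e⁆ = c • e) : IsNilpotent e := by
  by_contra hnil
  have hinj : Function.Injective fun n : ℕ ↦ (n * c : k) := fun m n hmn ↦ by
    simpa [hc] using hmn
  have hvec (n : ℕ) : (LieAlgebra.ad k A h).HasEigenvector (n * c) (e ^ n) :=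
    ⟨Module.End.mem_eigenspace_iff.2 (lie_pow_of_lie_eq_smul hhe n),
      fun h0 ↦ hnil ⟨n, h0⟩⟩
  have hfin : Finite ℕ :=
    (Module.End.eigenvectors_linearIndependent' _ _ hinj _ hvec).finite
  exact not_finite ℕ

end Associative

section Eigenspaces

variable {k M : Type*} [CommRing k] [AddCommGroup M] [Module k M] {h e f : Module.End k M}

lemma apply_mem_eigenspace_add {c μ : k} (hhe : ⁅h, e⁆ = c • e) {z : M}
    (hz : z ∈ h.eigenspace μ) : e z ∈ h.eigenspace (c + μ) := by
  rw [Module.End.mem_eigenspace_iff] at hz ⊢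
  have hhez : h (e z) - e (h z) = c • e z := LinearMap.congr_fun hhe z
  rw [eq_add_of_sub_eq hhez, hz, map_smul, add_smul]

lemma pow_succ_apply_of_sl2_relations (hhe : ⁅h, e⁆ = (2 : k) • e) (hef : ⁅e, f⁆ = h) {μ : k}
    {z : M} (hz : z ∈ h.eigenspace μ) (n : ℕ) :
    (e ^ (n + 1)) (f z) = f ((e ^ (n + 1)) z) + ((n + 1) * (μ + n)) • (e ^ n) z := by
  have hlie := LinearMap.congr_fun (pow_succ_lie_of_sl2_relations hhe hef n) z
  rw [Ring.lie_def, LinearMap.sub_apply, sub_eq_iff_eq_add'] at hlie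
  have hhz : (h + (n : Module.End k M)) z = (μ + n) • z := by
    rw [LinearMap.add_apply, Module.End.mem_eigenspace_iff.1 hz, Module.End.natCast_apply,
      add_smul, Nat.cast_smul_eq_nsmul]
  simp only [Module.End.mul_apply, LinearMap.smul_apply, hhz, map_smul] at hlie
  rw [hlie, mul_smul, ← Nat.cast_smul_eq_nsmul k, Nat.cast_add_one]

end Eigenspaces

/- By `pow_succ_apply_of_sl2_relations`, `e ^ n` kills `e (f z) - c • z` for some `c ≠ 0` whenever
`e ^ (n + 1)` kills `z`, so induction on `n` puts `c • z` in the image of `e`. -/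
lemma mem_map_eigenspace_of_pow_apply_eq_zero {k M : Type*} [Field k] [CharZero k]
    [AddCommGroup M] [Module k M] {h e f : Module.End k M} (hhe : ⁅h, e⁆ = (2 : k) • e)
    (hhf : ⁅h, f⁆ = (-2 : k) • f) (hef : ⁅e, f⁆ = h) {μ : k} (hμ : ∀ n : ℕ, μ + n ≠ 0)
    {n : ℕ} {z : M} (hz : z ∈ h.eigenspace μ) (hzn : (e ^ n) z = 0) :
    z ∈ (h.eigenspace (μ - 2)).map e := by
  induction n generalizing z with
  | zero =>
    rw [pow_zero, Module.End.one_apply] at hzn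
    exact hzn ▸ zero_mem _
  | succ n ih =>
    have hfz : f z ∈ h.eigenspace (μ - 2) := by
      simpa only [neg_add_eq_sub] using apply_mem_eigenspace_add hhf hz
    have hefz : e (f z) ∈ h.eigenspace μ := by
      simpa only [add_sub_cancel] using apply_mem_eigenspace_add hhe hfz
    set c : k := (n + 1) * (μ + n)
    have hc : c ≠ 0 := mul_ne_zero n.cast_add_one_ne_zero (hμ n)
    have hkill : (e ^ n) (e (f z) - c • z) = 0 := by
      rw [map_sub, map_smul, ← Module.End.mul_apply, ← pow_succ,
        pow_succ_apply_of_sl2_relations hhe hef hz, hzn, map_zero, zero_add, sub_self]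
    have hcz : c • z ∈ (h.eigenspace (μ - 2)).map e := by
      simpa only [sub_sub_cancel] using sub_mem (Submodule.mem_map_of_mem hfz)
        (ih (sub_mem hefz (Submodule.smul_mem _ c hz)) hkill)
    exact (Submodule.smul_mem_iff _ hc).1 hcz

section WeightSpaces

variable {k : Type*} [Field k] {g : Type*} [LieRing g] [LieAlgebra k g] {H : g}

lemma gwt_eq_eigenspace_ad (i : ℤ) : gwt k H i = (LieAlgebra.ad k g H).eigenspace (i : k) := by
  ext z
  rw [Module.End.mem_eigenspace_iff]
  rfl

lemma ad_lie_ad_eq_smul {c : k} {a : g} (ha : ⁅H, a⁆ = c • a) :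
    ⁅LieAlgebra.ad k g H, LieAlgebra.ad k g a⁆ = c • LieAlgebra.ad k g a := by
  rw [← LieHom.map_lie, ha, map_smul]

lemma lie_mem_gwt_add {i j : ℤ} {a b : g} (ha : a ∈ gwt k H i) (hb : b ∈ gwt k H j) :
    ⁅a, b⁆ ∈ gwt k H (i + j) := by
  rw [gwt_eq_eigenspace_ad] at hb ⊢
  simpa using apply_mem_eigenspace_add (ad_lie_ad_eq_smul ha) hb

lemma lie_mem_vsp_add {m n : ℤ} {a b : g} (ha : a ∈ vsp k H m) (hb : b ∈ vsp k H n) :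
    ⁅a, b⁆ ∈ vsp k H (m + n) := by
  suffices Submodule.map₂ (LieAlgebra.ad k g : g →ₗ[k] Module.End k g) (vsp k H m) (vsp k H n) ≤
      vsp k H (m + n) from this (Submodule.apply_mem_map₂ _ ha hb)
  simp_rw [vsp, Submodule.map₂_iSup_left, Submodule.map₂_iSup_right, iSup_le_iff]
  intro i hi j hj
  exact Submodule.map₂_le.2 fun a ha b hb ↦
    gwt_le_vsp k H (add_le_add hi hj) (lie_mem_gwt_add ha hb)

lemma lie_mem_brkt {V : Submodule k g} {a b : g} (ha : a ∈ V) (hb : b ∈ V) :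
    ⁅a, b⁆ ∈ brkt k V :=
  Submodule.subset_span ⟨a, ha, b, hb, rfl⟩

lemma brkt_vsp_le_vsp_add_self (n : ℤ) : brkt k (vsp k H n) ≤ vsp k H (n + n) := by
  refine Submodule.span_le.2 ?_
  rintro _ ⟨a, ha, b, hb, rfl⟩
  exact lie_mem_vsp_add ha hb

lemma vsp_eq_gwt_sup_vsp_add_one (n : ℤ) : vsp k H n = gwt k H n ⊔ vsp k H (n + 1) := by
  refine le_antisymm (iSup₂_le fun i hi ↦ ?_)
    (sup_le (gwt_le_vsp k H le_rfl) (iSup₂_le fun i hi ↦ gwt_le_vsp k H (by lia)))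
  obtain rfl | hlt := hi.eq_or_lt
  · exact le_sup_left
  · exact le_sup_of_le_right (gwt_le_vsp k H hlt)

lemma iSupIndep_gwt [CharZero k] : iSupIndep (gwt k H) := by
  simpa only [← gwt_eq_eigenspace_ad, Function.comp_def] using
    (LieAlgebra.ad k g H).eigenspaces_iSupIndep.comp (Int.cast_injective (α := k))

lemma disjoint_gwt_vsp [CharZero k] {i n : ℤ} (hin : i < n) :
    Disjoint (gwt k H i) (vsp k H n) :=
  iSupIndep_gwt.disjoint_biSup (y := Set.Ici n) hin.not_ge

lemma isLinearMap_addClassMap : IsLinearMap k (addClassMap k H) :=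
  (((brkt k (vsp k H 2)).comap (vsp k H 2).subtype).mkQ ∘ₗ
    (Submodule.inclusion (gwt_le_vsp k H le_rfl)).coprod
      (Submodule.inclusion (gwt_le_vsp k H (by norm_num)))).isLinear

lemma addClassMap_injective [CharZero k] : Function.Injective (addClassMap k H) := by
  refine (injective_iff_map_eq_zero (isLinearMap_addClassMap.mk' _)).2 ?_
  rintro ⟨⟨a, ha⟩, ⟨b, hb⟩⟩ hab
  have hab4 : a + b ∈ vsp k H 4 := brkt_vsp_le_vsp_add_self 2 <|
    (Submodule.Quotient.mk_eq_zero ((brkt k (vsp k H 2)).comap (vsp k H 2).subtype)).1 hab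
  have ha3 : a ∈ vsp k H 3 := by
    rw [vsp_eq_gwt_sup_vsp_add_one, ← add_sub_cancel_right a b]
    exact sub_mem (Submodule.mem_sup_right hab4) (Submodule.mem_sup_left hb)
  obtain rfl : a = 0 := Submodule.disjoint_def.1 (disjoint_gwt_vsp (by norm_num)) a ha ha3
  rw [zero_add] at hab4
  obtain rfl : b = 0 := Submodule.disjoint_def.1 (disjoint_gwt_vsp (by norm_num)) b hb hab4
  rfl

lemma addClassMap_surjective (hle : vsp k H 4 ≤ brkt k (vsp k H 2)) :
    Function.Surjective (addClassMap k H) := by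
  intro q
  obtain ⟨⟨v, hv⟩, rfl⟩ := Submodule.Quotient.mk_surjective _ q
  rw [vsp_eq_gwt_sup_vsp_add_one, vsp_eq_gwt_sup_vsp_add_one, ← sup_assoc] at hv
  obtain ⟨s, hs, c, hc, rfl⟩ := Submodule.mem_sup.1 hv
  obtain ⟨a, ha, b, hb, rfl⟩ := Submodule.mem_sup.1 hs
  refine ⟨(⟨a, ha⟩, ⟨b, hb⟩), (Submodule.Quotient.eq _).2 ?_⟩
  change a + b - (a + b + c) ∈ brkt k (vsp k H 2)
  rw [sub_add_cancel_left]
  exact neg_mem (hle hc)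

end WeightSpaces

section Sl2Triple

variable {k : Type*} [Field k] [CharZero k] {g : Type*} [LieRing g] [LieAlgebra k g] {H x Y : g}

lemma gwt_le_map_ad (hHx : ⁅H, x⁆ = (2 : k) • x) (hHY : ⁅H, Y⁆ = (-2 : k) • Y)
    (hxY : ⁅x, Y⁆ = H) (hnil : ∀ z, ∃ n, (LieAlgebra.ad k g x ^ n) z = 0) {i : ℤ} (hi : 0 < i) :
    gwt k H i ≤ (gwt k H (i - 2)).map (LieAlgebra.ad k g x) := by
  intro z hz
  obtain ⟨n, hn⟩ := hnil z
  have hne (m : ℕ) : (i : k) + m ≠ 0 := mod_cast (by lia : i + m ≠ 0)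
  rw [gwt_eq_eigenspace_ad] at hz ⊢
  push_cast
  exact mem_map_eigenspace_of_pow_apply_eq_zero (ad_lie_ad_eq_smul hHx) (ad_lie_ad_eq_smul hHY)
    (by rw [← LieHom.map_lie, hxY]) hne hz hn

lemma vsp_add_two_le_brkt_vsp (hHx : ⁅H, x⁆ = (2 : k) • x) (hHY : ⁅H, Y⁆ = (-2 : k) • Y)
    (hxY : ⁅x, Y⁆ = H) (hnil : ∀ z, ∃ n, (LieAlgebra.ad k g x ^ n) z = 0) {n : ℤ}
    (hn : -2 < n) (hn' : n ≤ 2) : vsp k H (n + 2) ≤ brkt k (vsp k H n) := by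
  have hx : x ∈ gwt k H 2 := by simpa [gwt] using hHx
  refine iSup₂_le fun i hi z hz ↦ ?_
  obtain ⟨w, hw, rfl⟩ := gwt_le_map_ad hHx hHY hxY hnil (by lia) hz
  exact lie_mem_brkt (gwt_le_vsp k H hn' hx) (gwt_le_vsp k H (by lia) hw)

lemma exists_ad_pow_apply_eq_zero [FiniteDimensional k g] (hHx : ⁅H, x⁆ = (2 : k) • x) (z : g) :
    ∃ n, (LieAlgebra.ad k g x ^ n) z = 0 := by
  obtain ⟨n, hn⟩ := isNilpotent_of_lie_eq_smul_s7 (two_ne_zero (α := k)) (ad_lie_ad_eq_smul hHx)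
  exact ⟨n, by rw [hn, LinearMap.zero_apply]⟩

end Sl2Triple

end Commutators

theorem stmt7_general {k : Type*} [Field k] [CharZero k]
    {g : Type*} [LieRing g] [LieAlgebra k g]
    (H x Y : g) (hHx : ⁅H, x⁆ = (2 : k) • x) (hHY : ⁅H, Y⁆ = (-2 : k) • Y)
    (hxY : ⁅x, Y⁆ = H) (hnil : ∀ z, ∃ n, (LieAlgebra.ad k g x ^ n) z = 0) :
    IsLinearMap k (addClassMap k H) ∧ Function.Bijective (addClassMap k H) :=
  ⟨isLinearMap_addClassMap, addClassMap_injective,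
    addClassMap_surjective (vsp_add_two_le_brkt_vsp (n := 2) hHx hHY hxY hnil (by norm_num) le_rfl)⟩

/-- The `k`-linear map `g_2 × g_3 → 𝔳 ⧸ ⁅𝔳, 𝔳⁆`, `(a, b) ↦ [a + b]`, is a
linear isomorphism. -/
theorem stmt7 {k : Type*} [Field k] [CharZero k]
    {g : Type*} [LieRing g] [LieAlgebra k g] [FiniteDimensional k g]
    (H x Y : g) (hHx : ⁅H, x⁆ = (2 : k) • x) (hHY : ⁅H, Y⁆ = (-2 : k) • Y)
    (hxY : ⁅x, Y⁆ = H) :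
    IsLinearMap k (addClassMap k H) ∧ Function.Bijective (addClassMap k H) :=
  stmt7_general H x Y hHx hHY hxY (exists_ad_pow_apply_eq_zero hHx)
end
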